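/- Let f : S → ℂ be a non-zero solution of the integral Kannappan equation, and define g : S → ℂ by g(x) := (Σ_{i∈I} c_i f(x z_i)) / (Σ_{i∈I} c_i f(z_i)) (the denominator being non-zero). Then g is a solution of d'Alembert's functional equation g(xy) + g(xτ(y)) = 2 g(x) g(y) for all x, y ∈ S, Σ_{i∈I} c_i g(z_i) ≠ 0, Σ_{i∈I} c_i g(x z_i) = g(x) · Σ_{i∈I} c_i g(z_i) for all x ∈ S, and f(x) = (Σ_{i∈I} c_i g(z_i)) · g(x) for all x ∈ S. -/

import Mathlib

/-!
Put `F x = ∫ f (x t) dμ(t)`, so that the equation reads `F (x y) + F (x τ(y)) = 2 f x f y`.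
Expanding both sides through this equation shows that
`(f (x y) + f (x τ(y))) f t = f x (f (y t) + f (τ(y) t))` for every central `t`. Integrating over
`t`, and then once more after replacing `x` by `x t`, gives
`(f (x y) + f (x τ(y))) ∫ f dμ = f x (F y + F (τ(y)))` and
`2 f x f y ∫ f dμ = F x (F y + F (τ(y)))`.
If `∫ f dμ` vanished, the first identity would make `F` odd under `τ`, which forces `f = 0`. So the
second identity makes `F` a multiple `l f` of `f`. As `f` is `τ`-even, `∫ f dμ = l ^ 2`, and
`g = F / ∫ f dμ = f / l`.
-/

section DAlembertPair

variable {S R : Type*} [CommRing R]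

/-- The common form of d'Alembert's equation (`F = f`) and of the integral Kannappan equation
(`F x = ∫ f (x t) dμ(t)`). The involution `τ` of the semigroup is written `star`. -/
def IsDAlembertPair [Mul S] [Star S] (F f : S → R) : Prop :=
  ∀ x y, F (x * y) + F (x * star y) = 2 * f x * f y

namespace IsDAlembertPair

variable [NoZeroDivisors R] [NeZero (2 : R)] {F f : S → R}

theorem apply_star [Mul S] [InvolutiveStar S] (h : IsDAlembertPair F f) (x : S) :
    f (star x) = f x := by
  have mul_apply_star (y : S) : f y * f (star x) = f y * f x := by
    have hstar := h y (star x)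
    rw [star_star] at hstar
    exact mul_left_cancel₀ two_ne_zero (by linear_combination h y x - hstar)
  have sq_sub_eq_zero : (f (star x) - f x) ^ 2 = 0 := by
    linear_combination mul_apply_star (star x) - mul_apply_star x
  exact sub_eq_zero.mp (eq_zero_of_pow_eq_zero sq_sub_eq_zero)

theorem eq_zero_of_odd [Mul S] [StarMul S] (h : IsDAlembertPair F f)
    (hodd : ∀ x, F (star x) = -F x) : f = 0 := by
  have apply_eq_zero_of_star_eq {x : S} (hx : star x = x) : F x = 0 := by
    have hF := hodd x
    rw [hx] at hF
    exact (mul_eq_zero_iff_left two_ne_zero).mp (by linear_combination hF)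
  have apply_mul_self (x : S) : F (x * x) = 2 * f x ^ 2 := by
    have hstar : F (x * star x) = 0 := apply_eq_zero_of_star_eq (by simp)
    linear_combination h x x - hstar
  ext x
  have hneg : 2 * f x ^ 2 = -(2 * f x ^ 2) := by
    calc 2 * f x ^ 2 = F (star x * star x) := by rw [apply_mul_self, h.apply_star]
      _ = -F (x * x) := by rw [← star_mul, hodd]
      _ = -(2 * f x ^ 2) := by rw [apply_mul_self]
  have hsq : 2 * (2 * f x ^ 2) = 0 := by linear_combination hneg
  simpa [two_ne_zero] using hsq

theorem add_mul_apply_of_mem_center [Semigroup S] [StarMul S] (h : IsDAlembertPair F f)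
    (x y : S) {z : S} (hz : z ∈ Set.center S) :
    (f (x * y) + f (x * star y)) * f z = f x * (f (y * z) + f (star y * z)) := by
  have star_mul_center (w : S) : star (w * z) = star w * star z := by
    rw [Semigroup.mem_center_iff.mp hz, star_mul]
  have h₁ := h x (y * z)
  have h₂ := h x (star y * z)
  rw [star_mul_center, ← mul_assoc, ← mul_assoc] at h₁ h₂
  rw [star_star] at h₂
  exact mul_left_cancel₀ two_ne_zero
    (by linear_combination h₁ + h₂ - h (x * y) z - h (x * star y) z)

end IsDAlembertPair

end DAlembertPair

section PointMassIntegral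

variable {S R ι : Type*} [CommRing R]

/-- Integration against the combination of Dirac measures `∑ i ∈ I, c i • δ (z i)`. -/
def pointMassIntegral (I : Finset ι) (c : ι → R) (z : ι → S) : (S → R) →ₗ[R] R :=
  ∑ i ∈ I, c i • LinearMap.proj (z i)

theorem pointMassIntegral_apply (I : Finset ι) (c : ι → R) (z : ι → S) (h : S → R) :
    pointMassIntegral I c z h = ∑ i ∈ I, c i * h (z i) := by
  simp [pointMassIntegral]

end PointMassIntegral

section Convolution

variable {S R : Type*} [Mul S] [CommRing R]

/-- The function `x ↦ ∫ f (x t) dμ(t)`, where the linear functional `Λ` is integration against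
`μ`. -/
def rightConvolution (Λ : (S → R) →ₗ[R] R) (f : S → R) (x : S) : R :=
  Λ fun t ↦ f (x * t)

/-- The functional `Λ` depends only on the values at central elements: the algebraic substitute for
integration against a measure supported in the center. -/
def IsCentrallySupported (Λ : (S → R) →ₗ[R] R) : Prop :=
  ∀ ⦃h₁ h₂ : S → R⦄, Set.EqOn h₁ h₂ (Set.center S) → Λ h₁ = Λ h₂

theorem rightConvolution_smul (Λ : (S → R) →ₗ[R] R) (a : R) (f : S → R) :
    rightConvolution Λ (a • f) = a • rightConvolution Λ f :=
  funext fun x ↦ Λ.map_smul a fun t ↦ f (x * t)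

theorem rightConvolution_pointMassIntegral {ι : Type*} (I : Finset ι) (c : ι → R) (z : ι → S)
    (f : S → R) (x : S) :
    rightConvolution (pointMassIntegral I c z) f x = ∑ i ∈ I, c i * f (x * z i) :=
  pointMassIntegral_apply I c z _

theorem isCentrallySupported_pointMassIntegral {ι : Type*} {I : Finset ι} (c : ι → R) {z : ι → S}
    (hz : ∀ i ∈ I, z i ∈ Set.center S) : IsCentrallySupported (pointMassIntegral I c z) := by
  intro h₁ h₂ heq
  simp only [pointMassIntegral_apply]
  exact Finset.sum_congr rfl fun i hi ↦ by rw [heq (hz i hi)]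

end Convolution

section IntegralKannappan

variable {S R : Type*} [Semigroup S] [StarMul S] [CommRing R] [NoZeroDivisors R] [NeZero (2 : R)]
  {Λ : (S → R) →ₗ[R] R} {f : S → R}

theorem IsCentrallySupported.add_mul_apply (hΛ : IsCentrallySupported Λ)
    (hf : IsDAlembertPair (rightConvolution Λ f) f) (x y : S) :
    (f (x * y) + f (x * star y)) * Λ f =
      f x * (rightConvolution Λ f y + rightConvolution Λ f (star y)) := by
  have heq : Set.EqOn ((f (x * y) + f (x * star y)) • f)
      (f x • ((fun t ↦ f (y * t)) + fun t ↦ f (star y * t))) (Set.center S) :=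
    fun _ ht ↦ hf.add_mul_apply_of_mem_center x y ht
  simpa only [rightConvolution, map_smul, map_add, smul_eq_mul] using hΛ heq

theorem IsCentrallySupported.two_mul_mul_apply (hΛ : IsCentrallySupported Λ)
    (hf : IsDAlembertPair (rightConvolution Λ f) f) (x y : S) :
    2 * f x * f y * Λ f =
      rightConvolution Λ f x * (rightConvolution Λ f y + rightConvolution Λ f (star y)) := by
  set F := rightConvolution Λ f
  have heq : Set.EqOn (Λ f • ((fun t ↦ f (x * y * t)) + fun t ↦ f (x * star y * t)))
      ((F y + F (star y)) • fun t ↦ f (x * t)) (Set.center S) := by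
    intro t ht
    have mul_right_comm_center (w : S) : x * t * w = x * w * t := by
      rw [mul_assoc, ← Semigroup.mem_center_iff.mp ht, mul_assoc]
    have h := hΛ.add_mul_apply hf (x * t) y
    rw [mul_right_comm_center, mul_right_comm_center] at h
    simp only [Pi.smul_apply, Pi.add_apply, smul_eq_mul]
    linear_combination h
  have hΛ_eq : Λ f * (F (x * y) + F (x * star y)) = (F y + F (star y)) * F x := by
    simpa only [F, rightConvolution, map_smul, map_add, smul_eq_mul] using hΛ heq
  linear_combination hΛ_eq - Λ f * hf x y

theorem IsCentrallySupported.apply_ne_zero (hΛ : IsCentrallySupported Λ)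
    (hf : IsDAlembertPair (rightConvolution Λ f) f) (hf₀ : f ≠ 0) : Λ f ≠ 0 := by
  intro hzero
  obtain ⟨x, hx⟩ := Function.ne_iff.mp hf₀
  refine hf₀ (hf.eq_zero_of_odd fun y ↦ ?_)
  have h := hΛ.add_mul_apply hf x y
  rw [hzero, mul_zero, eq_comm, mul_eq_zero_iff_left hx] at h
  linear_combination h

end IntegralKannappan

section Field

variable {S K : Type*} [Field K]

theorem IsDAlembertPair.inv_smul [Mul S] [Star S] {f : S → K} {l : K} (hl : l ≠ 0)
    (h : IsDAlembertPair (l • f) f) : IsDAlembertPair (l⁻¹ • f) (l⁻¹ • f) := by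
  intro x y
  have hxy := h x y
  simp only [Pi.smul_apply, smul_eq_mul] at hxy ⊢
  field_simp
  linear_combination hxy

variable [Semigroup S] [StarMul S] [NeZero (2 : K)] {Λ : (S → K) →ₗ[K] K} {f : S → K}

theorem IsCentrallySupported.exists_rightConvolution_eq_smul (hΛ : IsCentrallySupported Λ)
    (hf : IsDAlembertPair (rightConvolution Λ f) f) (hf₀ : f ≠ 0) :
    ∃ l : K, l ≠ 0 ∧ rightConvolution Λ f = l • f ∧ Λ f = l ^ 2 := by
  obtain ⟨y, hy⟩ := Function.ne_iff.mp hf₀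
  set F := rightConvolution Λ f
  have hprod (x : S) : 2 * f x * f y * Λ f = F x * (F y + F (star y)) :=
    hΛ.two_mul_mul_apply hf x y
  have hscale : 2 * f y * Λ f ≠ 0 :=
    mul_ne_zero (mul_ne_zero two_ne_zero hy) (hΛ.apply_ne_zero hf hf₀)
  have hsum : F y + F (star y) ≠ 0 := by
    intro hzero
    have h := hprod y
    rw [hzero, mul_zero] at h
    exact mul_ne_zero hscale hy (by linear_combination h)
  obtain ⟨l, hFl⟩ : ∃ l : K, ∀ x, F x = l * f x := by
    refine ⟨2 * f y * Λ f / (F y + F (star y)), fun x ↦ ?_⟩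
    field_simp
    linear_combination -hprod x
  have hΛl : Λ f = l ^ 2 := by
    have h := hprod y
    rw [hFl, hFl, hf.apply_star] at h
    exact mul_left_cancel₀ (mul_ne_zero (mul_ne_zero two_ne_zero hy) hy)
      (by linear_combination h)
  refine ⟨l, ?_, funext hFl, hΛl⟩
  rintro rfl
  exact hΛ.apply_ne_zero hf hf₀ (by simpa using hΛl)

theorem stmt_17_general (hΛ : IsCentrallySupported Λ)
    (hf : IsDAlembertPair (rightConvolution Λ f) f) (hf₀ : f ≠ 0) {g : S → K}
    (hg : ∀ x, g x = rightConvolution Λ f x / Λ f) :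
    IsDAlembertPair g g ∧ Λ g ≠ 0 ∧ (∀ x, rightConvolution Λ g x = g x * Λ g) ∧
      ∀ x, f x = Λ g * g x := by
  obtain ⟨l, hl, hF, hΛf⟩ := hΛ.exists_rightConvolution_eq_smul hf hf₀
  obtain rfl : g = l⁻¹ • f := by
    ext x
    rw [hg, hF, hΛf, Pi.smul_apply, Pi.smul_apply, smul_eq_mul, smul_eq_mul]
    field_simp
  have hΛg : Λ (l⁻¹ • f) = l := by
    rw [map_smul, hΛf, smul_eq_mul]
    field_simp
  rw [hF] at hf
  rw [hΛg, rightConvolution_smul, hF]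
  refine ⟨hf.inv_smul hl, hl, fun x ↦ ?_, fun x ↦ ?_⟩ <;>
    simp only [Pi.smul_apply, smul_eq_mul] <;> field_simp

end Field

theorem stmt_17 {S ι : Type*} [Semigroup S] (τ : S → S)
    (hτmul : ∀ x y : S, τ (x * y) = τ y * τ x)
    (hτinv : ∀ x : S, τ (τ x) = x)
    (I : Finset ι) (c : ι → ℂ) (z : ι → S)
    (hz : ∀ i ∈ I, ∀ s : S, z i * s = s * z i)
    (f : S → ℂ) (hf : f ≠ 0)
(hK : ∀ x y : S,
      (∑ i ∈ I, c i * f (x * y * z i)) + (∑ i ∈ I, c i * f (x * τ y * z i))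
        = 2 * f x * f y)
    (g : S → ℂ)
    (hg : ∀ x : S, g x = (∑ i ∈ I, c i * f (x * z i)) / (∑ i ∈ I, c i * f (z i))) :
    (∀ x y : S, g (x * y) + g (x * τ y) = 2 * g x * g y) ∧
    (∑ i ∈ I, c i * g (z i)) ≠ 0 ∧
    (∀ x : S, (∑ i ∈ I, c i * g (x * z i)) = g x * ∑ i ∈ I, c i * g (z i)) ∧
    (∀ x : S, f x = (∑ i ∈ I, c i * g (z i)) * g x) := by
  let _ : StarMul S := { star := τ, star_mul := hτmul, star_involutive := hτinv }
  have hΛ : IsCentrallySupported (pointMassIntegral I c z) :=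
    isCentrallySupported_pointMassIntegral c fun i hi ↦
      Semigroup.mem_center_iff.mpr fun s ↦ (hz i hi s).symm
  have h := stmt_17_general (f := f) (g := g) hΛ
  simp only [IsDAlembertPair, rightConvolution_pointMassIntegral, pointMassIntegral_apply] at h
  exact h hK hf hg
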